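/- Let T: ℝ^n → ℂ be given by T(F) = exp(-(1/2)Q(F)) where Q is a symmetric ℂ-bilinear form on ℂ^n restricted to ℝ^n. Define ⟨⟨Φ, ∏_{j=1}^{2m} ⟨·,F_j⟩⟩⟩ := (-1)^m ∂^{2m}/∂t_1⋯∂t_{2m} T(t_1 F_1 + ⋯ + t_{2m} F_{2m})|_{t=0}. Then ⟨⟨Φ, ∏_{j=1}^{2m} ⟨·,F_j⟩⟩⟩ = Σ_{pairings} ∏_{r=1}^{m} Q(F_{k_r}, F_{l_r}), where the sum runs over all (2m)!/(2^m m!) partitions of {1,…,2m} into m unordered pairs (k_r, l_r). -/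

import Mathlib

open Complex Finset

/-!
Write `f t = exp (-(1/2) Q(∑ tⱼ Fⱼ, ∑ tⱼ Fⱼ))`. Differentiating once in a coordinate direction `v`
gives `∂ᵥ f = L f` with `L t = -Q(F_v, ∑ tⱼ Fⱼ)` linear. Since `L 0 = 0` and `L` has no second
derivatives, the Leibniz rule (`partials_linear_mul`) expresses the remaining mixed derivative of
`L f` at the origin as `∑ᵢ -Q(F_v, Fᵢ)` times the mixed derivative of `f` in all directions other
than `v` and `i`. The sum over pairings satisfies the same recursion up to sign
(`pairingSum_insert`): sort the pairings by the partner `i` of `v` and delete the pair `{v, i}`.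
Induction on the number of pairs finishes the proof.
-/

/-- The sum over all pairings of `S` of the product of the weights `a` of the pairs. A pairing is
encoded as the involution of the ambient type whose set of non-fixed points is exactly `S`; each
pair `{j, σ j}` contributes once, through its smaller element. -/
def pairingSum {ι : Type*} [Fintype ι] [LinearOrder ι] (a : ι → ι → ℂ) (S : Finset ι) : ℂ :=
  ∑ σ ∈ univ.filter (fun σ : Equiv.Perm ι => σ * σ = 1 ∧ ∀ i, σ i ≠ i ↔ i ∈ S),
    ∏ j ∈ univ.filter (fun j => j < σ j), a j (σ j)

lemma pairingSum_empty {ι : Type*} [Fintype ι] [LinearOrder ι] (a : ι → ι → ℂ) :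
    pairingSum a ∅ = 1 := by
  have h : (univ.filter (fun σ : Equiv.Perm ι => σ * σ = 1 ∧ ∀ i, σ i ≠ i ↔ i ∈ (∅ : Finset ι)))
      = {1} := by
    ext σ
    simp only [mem_filter, mem_univ, true_and, mem_singleton, notMem_empty, iff_false, not_not]
    constructor
    · rintro ⟨_, h⟩
      exact Equiv.ext h
    · rintro rfl
      simp
  rw [pairingSum, h]
  simp

/-- Deleting the pair `{v, σ v}` from a pairing divides its weight by `a v (σ v)`; symmetry of `a`
makes it irrelevant which of the two elements is smaller. -/
lemma prod_swap_mul {ι : Type*} [Fintype ι] [LinearOrder ι] (a : ι → ι → ℂ)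
    (ha : ∀ i j, a i j = a j i) (v : ι) (σ : Equiv.Perm ι) (hσ : ∀ j, σ (σ j) = j)
    (hv : σ v ≠ v) :
    ∏ j ∈ univ.filter (fun j => j < σ j), a j (σ j) =
      a v (σ v) * ∏ j ∈ univ.filter (fun j => j < (Equiv.swap v (σ v) * σ) j),
        a j ((Equiv.swap v (σ v) * σ) j) := by
  set τ := Equiv.swap v (σ v) * σ with hτ
  have h1 : τ v = v := by simp [hτ]
  have h2 : τ (σ v) = σ v := by simp [hτ, hσ]
  have h3 : ∀ j, j ≠ v → j ≠ σ v → τ j = σ j := by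
    intro j hj hj'
    rw [hτ, Equiv.Perm.mul_apply]
    refine Equiv.swap_apply_of_ne_of_ne (fun h => hj' ?_) (fun h => hj (σ.injective h))
    rw [← h, hσ]
  clear_value τ
  have h4 : ∀ j ∈ univ.filter (fun j => j < τ j), a j (τ j) = a j (σ j) := by
    intro j hj
    have hj := (mem_filter.1 hj).2
    rw [h3 j (by rintro rfl; simp [h1] at hj) (by rintro rfl; simp [h2] at hj)]
  rw [prod_congr rfl h4]
  rcases lt_or_gt_of_ne hv with h | h
  · have : univ.filter (fun j => j < σ j) = insert (σ v) (univ.filter (fun j => j < τ j)) := by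
      ext j
      simp only [mem_filter, mem_univ, true_and, mem_insert]
      by_cases hj : j = v
      · subst hj
        simp [h1, h.ne', h.not_gt]
      by_cases hj' : j = σ v
      · subst hj'
        simp [h2, hσ, h]
      simp [h3 j hj hj', hj']
    rw [this, prod_insert (by simp [h2]), hσ, ha]
  · have : univ.filter (fun j => j < σ j) = insert v (univ.filter (fun j => j < τ j)) := by
      ext j
      simp only [mem_filter, mem_univ, true_and, mem_insert]
      by_cases hj : j = v
      · subst hj
        simp [h1, h]
      by_cases hj' : j = σ v
      · subst hj'
        simp [h2, hσ, h.ne', h.not_gt]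
      simp [h3 j hj hj', hj]
    rw [this, prod_insert (by simp [h1])]

/-- Expansion of the pairing sum along the possible partners of a fixed element `v`. -/
lemma pairingSum_insert {ι : Type*} [Fintype ι] [LinearOrder ι] (a : ι → ι → ℂ)
    (ha : ∀ i j, a i j = a j i) (v : ι) (S : Finset ι) (hv : v ∉ S) :
    pairingSum a (insert v S) = ∑ i ∈ S, a v i * pairingSum a (S.erase i) := by
  have inv : ∀ σ : Equiv.Perm ι, σ * σ = 1 ↔ ∀ j, σ (σ j) = j := fun σ => by
    simp [Equiv.ext_iff]
  have fix : ∀ σ : Equiv.Perm ι, ∀ i, Equiv.swap v i * (Equiv.swap v i * σ) = σ := fun σ i => by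
    simp
  unfold pairingSum
  rw [← sum_fiberwise_of_maps_to (t := S) (g := fun σ : Equiv.Perm ι => σ v)]
  · refine sum_congr rfl fun i hi => ?_
    have hiv : i ≠ v := by rintro rfl; exact hv hi
    rw [mul_sum]
    -- Multiplying by the transposition deletes, or restores, the pair made of `v` and `i`.
    refine sum_bij' (fun σ _ => Equiv.swap v i * σ) (fun τ _ => Equiv.swap v i * τ) ?_ ?_
      (fun σ _ => fix σ i) (fun σ _ => fix σ i) ?_
    · intro σ hσ
      simp only [mem_filter, mem_univ, true_and, inv, mem_insert, mem_erase,
        Equiv.Perm.mul_apply, Equiv.swap_apply_def] at hσ ⊢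
      grind
    · intro τ hτ
      simp only [mem_filter, mem_univ, true_and, inv, mem_insert, mem_erase,
        Equiv.Perm.mul_apply, Equiv.swap_apply_def] at hτ ⊢
      grind
    · intro σ hσ
      simp only [mem_filter, mem_univ, true_and, inv] at hσ
      obtain ⟨⟨h1, -⟩, rfl⟩ := hσ
      exact prod_swap_mul a ha v σ h1 hiv
  · intro σ hσ
    simp only [mem_filter, mem_univ, true_and, inv, mem_insert] at hσ
    grind

/-- The iterated directional derivative of `g` along the directions `e i`, `i ∈ l`; the head of the
list is the direction of the derivative taken first. -/
noncomputable def partials {ι E : Type*} [NormedAddCommGroup E] [NormedSpace ℝ E] (e : ι → E) :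
    List ι → (E → ℂ) → E → ℂ
  | [], g => g
  | v :: l, g => partials e l (fun x => fderiv ℝ g x (e v))

section
variable {ι E : Type*} [NormedAddCommGroup E] [NormedSpace ℝ E] (e : ι → E)

lemma contDiff_fderiv_dir {g : E → ℂ} (hg : ContDiff ℝ ⊤ g) (v : E) :
    ContDiff ℝ ⊤ (fun x => fderiv ℝ g x v) :=
  (hg.fderiv_right (m := ⊤) (by simp)).clm_apply contDiff_const

lemma partials_add (l : List ι) {g h : E → ℂ} (hg : ContDiff ℝ ⊤ g) (hh : ContDiff ℝ ⊤ h) (x : E) :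
    partials e l (fun x => g x + h x) x = partials e l g x + partials e l h x := by
  induction l generalizing g h with
  | nil => rfl
  | cons v l ih =>
    have : (fun x => fderiv ℝ (fun x => g x + h x) x (e v)) =
        fun x => fderiv ℝ g x (e v) + fderiv ℝ h x (e v) := by
      ext x
      rw [fderiv_fun_add (hg.differentiable (by simp) x) (hh.differentiable (by simp) x)]
      rfl
    simp only [partials]
    rw [this, ih (contDiff_fderiv_dir hg _) (contDiff_fderiv_dir hh _)]

lemma partials_const_mul (l : List ι) (c : ℂ) {g : E → ℂ} (hg : ContDiff ℝ ⊤ g) (x : E) :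
    partials e l (fun x => c * g x) x = c * partials e l g x := by
  induction l generalizing g with
  | nil => rfl
  | cons v l ih =>
    have : (fun x => fderiv ℝ (fun x => c * g x) x (e v)) =
        fun x => c * fderiv ℝ g x (e v) := by
      ext x
      rw [fderiv_const_mul (hg.differentiable (by simp) x)]
      rfl
    simp only [partials]
    rw [this, ih (contDiff_fderiv_dir hg _)]

/-- Leibniz rule for the product with a linear function: at most one derivative hits it. -/
lemma partials_linear_mul [DecidableEq ι] (L : E →L[ℝ] ℂ) (l : List ι) (hl : l.Nodup) {g : E → ℂ}
    (hg : ContDiff ℝ ⊤ g) (x : E) :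
    partials e l (fun x => L x * g x) x =
      L x * partials e l g x + ∑ i ∈ l.toFinset, L (e i) * partials e (l.erase i) g x := by
  induction l generalizing g with
  | nil => simp [partials]
  | cons v l ih =>
    obtain ⟨hv, hl⟩ := List.nodup_cons.1 hl
    have : (fun x => fderiv ℝ (fun x => L x * g x) x (e v)) =
        fun x => L x * fderiv ℝ g x (e v) + L (e v) * g x := by
      ext x
      rw [fderiv_fun_mul L.differentiableAt (hg.differentiable (by simp) x)]
      simp [mul_comm]
    have hg' := contDiff_fderiv_dir hg (e v)
    rw [List.toFinset_cons, sum_insert (by simpa using hv), List.erase_cons_head]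
    simp only [partials]
    rw [this, partials_add e l (L.contDiff.mul hg') (contDiff_const.mul hg),
      partials_const_mul e l _ hg, ih hl hg', add_assoc, add_comm (∑ _ ∈ _, _)]
    congr 2
    refine sum_congr rfl fun i hi => ?_
    have hi : v ≠ i := by rintro rfl; exact hv (by simpa using hi)
    rw [List.erase_cons_tail (by simpa using hi), partials]

/-- `iteratedFDeriv_succ_apply_right` peels off the last slot as the derivative taken first, hence
the reversal of the list of directions. -/
lemma iteratedFDeriv_eq_partials (k : ℕ) (w : Fin k → ι) {g : E → ℂ} (hg : ContDiff ℝ ⊤ g) (x : E) :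
    iteratedFDeriv ℝ k g x (fun i => e (w i)) = partials e (List.ofFn w).reverse g x := by
  induction k generalizing g with
  | zero => simp [partials]
  | succ k ih =>
    have hd : ContDiff ℝ ⊤ (fderiv ℝ g) := hg.fderiv_right (by simp)
    rw [List.ofFn_succ', List.concat_eq_append, List.reverse_append, List.reverse_singleton,
      List.singleton_append, partials, ← ih _ (contDiff_fderiv_dir hg _),
      iteratedFDeriv_succ_apply_right]
    have := (ContinuousLinearMap.apply ℝ ℂ (e (w (Fin.last k)))).iteratedFDeriv_comp_left
      (f := fderiv ℝ g) (x := x) (i := k) (n := ⊤) hd.contDiffAt (by exact_mod_cast le_top)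
    have h2 : (⇑(ContinuousLinearMap.apply ℝ ℂ (e (w (Fin.last k)))) ∘ fderiv ℝ g) =
      fun y => fderiv ℝ g y (e (w (Fin.last k))) := rfl
    rw [h2] at this
    rw [this]
    rfl

/-- Wick's theorem for a function with Gaussian logarithmic derivative, in the form
`∂ᵢ g = Lᵢ g` with `Lᵢ` linear and `Lᵢ (eⱼ) = -a i j`. -/
lemma partials_gaussian [Fintype ι] [LinearOrder ι] (a : ι → ι → ℂ) (ha : ∀ i j, a i j = a j i)
    {g : E → ℂ} (hg : ContDiff ℝ ⊤ g) (hg0 : g 0 = 1) (L : ι → E →L[ℝ] ℂ)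
    (hL : ∀ i x, fderiv ℝ g x (e i) = L i x * g x) (hLa : ∀ i j, L i (e j) = -a i j)
    (m : ℕ) (l : List ι) (hl : l.Nodup) (hlen : l.length = 2 * m) :
    (-1 : ℂ) ^ m * partials e l g 0 = pairingSum a l.toFinset := by
  induction m generalizing l with
  | zero =>
    obtain rfl : l = [] := List.length_eq_zero_iff.1 (by simpa using hlen)
    simp [partials, hg0, pairingSum_empty]
  | succ m ih =>
    obtain _ | ⟨v, l⟩ := l
    · simp at hlen
    obtain ⟨hv, hl⟩ := List.nodup_cons.1 hl
    rw [List.toFinset_cons, pairingSum_insert a ha v _ (by simpa using hv), partials]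
    simp only [hL]
    rw [partials_linear_mul e (L v) l hl hg, map_zero, zero_mul, zero_add, mul_sum]
    refine sum_congr rfl fun i hi => ?_
    have hi' : i ∈ l := by simpa using hi
    have hset : l.toFinset.erase i = (l.erase i).toFinset := by
      ext j
      simp [hl.mem_erase_iff]
    rw [hset, ← ih (l.erase i) (hl.erase i), hLa]
    · ring
    · rw [List.length_erase_of_mem hi']
      simp only [List.length_cons] at hlen
      omega

end

/-- Wick theorem for the Gaussian-type functional T(F) = exp(-(1/2)Q(F,F)). -/
theorem stmt4 (n m : ℕ) (hm : 0 < m)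
    (Q : (Fin n → ℝ) →ₗ[ℝ] (Fin n → ℝ) →ₗ[ℝ] ℂ)
    (hQsymm : ∀ x y, Q x y = Q y x)
    (F : Fin (2 * m) → (Fin n → ℝ)) :
    (-1 : ℂ) ^ m *
      iteratedFDeriv ℝ (2 * m)
        (fun t : Fin (2 * m) → ℝ =>
          Complex.exp (-(1 / 2 : ℂ) * Q (∑ j, t j • F j) (∑ j, t j • F j)))
        0 (fun i => Pi.single i 1)
    = ∑ σ ∈ Finset.univ.filter
        (fun σ : Equiv.Perm (Fin (2 * m)) => σ * σ = 1 ∧ ∀ i, σ i ≠ i),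
        ∏ j ∈ Finset.univ.filter (fun j => j < σ j), Q (F j) (F (σ j)) := by
  set S : (Fin (2 * m) → ℝ) →ₗ[ℝ] (Fin n → ℝ) := Fintype.linearCombination ℝ F with hS
  -- The pulled-back form as a continuous bilinear map (all spaces are finite-dimensional).
  let B : (Fin (2 * m) → ℝ) →L[ℝ] (Fin (2 * m) → ℝ) →L[ℝ] ℂ :=
    LinearMap.toContinuousLinearMap
      ((LinearMap.toContinuousLinearMap (𝕜 := ℝ)).toLinearMap ∘ₗ (Q.compl₁₂ S S))
  have hB : ∀ x y, B x y = Q (S x) (S y) := fun x y => rfl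
  have hfun : (fun t : Fin (2 * m) → ℝ =>
      Complex.exp (-(1 / 2 : ℂ) * Q (∑ j, t j • F j) (∑ j, t j • F j))) =
      fun t => Complex.exp (-(1 / 2 : ℂ) * B t t) := by
    ext t
    simp [hB, hS, Fintype.linearCombination_apply]
  have hSe : ∀ i, S (Pi.single i 1) = F i := fun i => by simp [hS]
  have hBd : ∀ t, HasFDerivAt (fun t => B t t)
      (B.precompR _ t (.id ℝ _) + B.precompL _ (.id ℝ _) t) t :=
    fun t => B.hasFDerivAt_of_bilinear (hasFDerivAt_id t) (hasFDerivAt_id t)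
  have hg : ContDiff ℝ ⊤ (fun t => Complex.exp (-(1 / 2 : ℂ) * B t t)) :=
    (contDiff_const.mul (B.contDiff.clm_apply contDiff_id)).cexp
  have key := partials_gaussian (fun i : Fin (2 * m) => (Pi.single i 1 : Fin (2 * m) → ℝ))
    (fun i j => Q (F i) (F j)) (fun i j => hQsymm _ _) hg (by simp)
    (fun i => -B (Pi.single i 1)) ?_ ?_ m (List.ofFn id).reverse
    (List.nodup_reverse.2 (List.nodup_ofFn.2 Function.injective_id)) (by simp)
  · rw [hfun]
    have := iteratedFDeriv_eq_partials (fun i : Fin (2 * m) => (Pi.single i 1 : Fin (2 * m) → ℝ))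
      (2 * m) id hg 0
    simp only [id] at this
    rw [this]
    refine key.trans ?_
    simp [pairingSum]
  · intro i x
    rw [((hBd x).const_mul _).cexp.fderiv]
    have : B x (Pi.single i 1) = B (Pi.single i 1) x := by simp only [hB, hQsymm (S x)]
    simp [this]
    ring
  · intro i j
    simp [hB, hSe]
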